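/- (Strong converse exponent of classical data compression): Let p be a probability distribution on a finite alphabet X and 0 ≤ r < H(p). Define P_s(n,r) as the maximum over pairs of functions f : X^n → {0,1}^{⌈nr⌉}, g : {0,1}^{⌈nr⌉} → X^n of the probability ∑_{x^n : g(f(x^n)) = x^n} p^n(x^n). Then lim_{n→∞} (−1/n) log₂ P_s(n,r) = sup_{β > 1} ((β−1)/β)·(H_β(p) − r), where H_β(p) = (1/(1−β)) log₂ ∑_x p(x)^β. -/

import Mathlib

/-- `p` is a probability distribution on the finite set `X`. -/
def IsProb {X : Type*} [Fintype X] (p : X → ℝ) : Prop :=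
  (∀ x, 0 ≤ p x) ∧ ∑ x, p x = 1

/-- Base-2 Shannon entropy. -/
noncomputable def shannonEntropy {X : Type*} [Fintype X] (t : X → ℝ) : ℝ :=
  -∑ x, t x * Real.logb 2 (t x)

/-!
A code is correct exactly on a set of at most `2 ^ k` words, so the success probability is the
largest weight of such a set. Hölder's inequality with exponent `β` bounds the weight of any such
set, which shows that the exponent is at least `(β - 1) / β * (H_β(p) - r)`. Conversely, for every
distribution `q` supported in that of `p`, covering the `q`-typical words attains the exponent
`H(q, p) - min r H(q) = D(q‖p) + max (H(q) - r) 0`. For the tilted distribution `q ∝ p ^ β` this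
exceeds the Hölder bound only by a multiple of `|H(q) - r|`, and `β` can be chosen to make this gap
arbitrarily small: at the order where `H(q) = r` if there is one, and otherwise as `β → 1` or
`β → ∞`.
-/

open Filter MeasureTheory ProbabilityTheory Real Set Topology

section OneShot

lemma exists_forall_mem_leftInverse {Y C : Type*} [Nonempty Y] [Fintype C] [Nonempty C]
    {A : Finset Y} (hA : A.card ≤ Fintype.card C) :
    ∃ (f : Y → C) (g : C → Y), ∀ y ∈ A, g (f y) = y := by
  obtain ⟨e⟩ : Nonempty (A ↪ C) := Function.Embedding.nonempty_of_card_le (by simpa using hA)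
  refine ⟨Function.extend Subtype.val e fun _ => Classical.arbitrary C,
    Function.extend e Subtype.val fun _ => Classical.arbitrary Y, fun y hy => ?_⟩
  rw [Subtype.val_injective.extend_apply e _ ⟨y, hy⟩, e.injective.extend_apply]

variable {Y : Type*} [Fintype Y] [DecidableEq Y]

lemma card_filter_leftInverse_le {C : Type*} [Fintype C] (f : Y → C) (g : C → Y) :
    (Finset.univ.filter fun y => g (f y) = y).card ≤ Fintype.card C := by
  refine Finset.card_le_card_of_injOn f (fun _ _ => Finset.mem_coe.2 (Finset.mem_univ _)) ?_
  intro y hy z hz hyz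
  rw [← (Finset.mem_filter.1 hy).2, hyz, (Finset.mem_filter.1 hz).2]

/-- The success probability of the best code with `k`-bit codewords for a source with
distribution `w`. The weights `w` need not be normalized. -/
noncomputable def optSuccess (w : Y → ℝ) (k : ℕ) : ℝ :=
  sSup {v | ∃ (f : Y → (Fin k → Bool)) (g : (Fin k → Bool) → Y),
    v = ∑ y : {y : Y // g (f y) = y}, w y.1}

lemma isLUB_optSuccess [Nonempty Y] {w : Y → ℝ} (hw : 0 ≤ w) (k : ℕ) :
    IsLUB {v | ∃ A : Finset Y, A.card ≤ 2 ^ k ∧ ∑ y ∈ A, w y = v} (optSuccess w k) := by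
  have card_code : Fintype.card (Fin k → Bool) = 2 ^ k := by simp
  have sum_correct (f : Y → (Fin k → Bool)) (g : (Fin k → Bool) → Y) :
      ∑ y : {y : Y // g (f y) = y}, w y.1 = ∑ y with g (f y) = y, w y :=
    (Finset.sum_subtype _ (by simp) w).symm
  have code_isLUB := isLUB_csSup (s := {v | ∃ (f : Y → (Fin k → Bool)) (g : (Fin k → Bool) → Y),
      v = ∑ y : {y : Y // g (f y) = y}, w y.1})
    ⟨_, fun _ => default, fun _ => Classical.arbitrary Y, rfl⟩
    ⟨∑ y, w y, by
      rintro _ ⟨f, g, rfl⟩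
      rw [sum_correct]
      exact Finset.sum_le_univ_sum_of_nonneg hw⟩
  constructor
  · rintro _ ⟨A, hA, rfl⟩
    obtain ⟨f, g, hfg⟩ :=
      exists_forall_mem_leftInverse (C := Fin k → Bool) (hA.trans_eq card_code.symm)
    refine le_trans ?_ (code_isLUB.1 ⟨f, g, rfl⟩)
    rw [sum_correct]
    exact Finset.sum_le_sum_of_subset_of_nonneg (fun y hy => by simpa using hfg y hy)
      fun y _ _ => hw y
  · refine fun b hb => code_isLUB.2 ?_
    rintro _ ⟨f, g, rfl⟩
    exact hb ⟨_, (card_filter_leftInverse_le f g).trans_eq card_code, (sum_correct f g).symm⟩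

lemma optSuccess_pos {w : Y → ℝ} (hw : 0 < w) (k : ℕ) : 0 < optSuccess w k := by
  obtain ⟨y, hy⟩ := (Pi.lt_def.1 hw).2
  have : Nonempty Y := ⟨y⟩
  exact hy.trans_le <| (isLUB_optSuccess hw.le k).1
    ⟨{y}, by simpa using Nat.one_le_two_pow, by simp⟩

lemma optSuccess_le_rpow_mul_rpow [Nonempty Y] {w : Y → ℝ} (hw : 0 ≤ w) (k : ℕ) {β : ℝ}
    (hβ : 1 < β) :
    optSuccess w k ≤ ((2 : ℝ) ^ k) ^ ((β - 1) / β) * (∑ y, w y ^ β) ^ (1 / β) := by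
  refine (isLUB_optSuccess hw k).2 ?_
  rintro _ ⟨A, hA, rfl⟩
  have rpow_nonneg (y : Y) : 0 ≤ w y ^ β := Real.rpow_nonneg (hw y) β
  have sum_nonneg : 0 ≤ ∑ y ∈ A, w y ^ β := Finset.sum_nonneg fun y _ => rpow_nonneg y
  have holder := Real.inner_le_Lp_mul_Lq_of_nonneg A
    (Real.HolderConjugate.conjExponent hβ).symm (f := 1) (fun _ _ => zero_le_one) fun y _ => hw y
  have conj_inv : 1 / Real.conjExponent β = (β - 1) / β := by
    rw [Real.conjExponent, one_div_div]
  simp only [Pi.one_apply, one_mul, Real.one_rpow, Finset.sum_const, nsmul_eq_mul, mul_one,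
    conj_inv] at holder
  refine holder.trans ?_
  have sum_le : ∑ y ∈ A, w y ^ β ≤ ∑ y, w y ^ β := Finset.sum_le_univ_sum_of_nonneg rpow_nonneg
  have card_le : (A.card : ℝ) ≤ 2 ^ k := by exact_mod_cast hA
  gcongr

lemma min_mul_le_optSuccess [Nonempty Y] {w : Y → ℝ} (hw : 0 ≤ w) (k : ℕ) {T : Finset Y} {m : ℝ}
    (hT : ∀ y ∈ T, m ≤ w y) : min (2 ^ k) (T.card : ℝ) * m ≤ optSuccess w k := by
  obtain ⟨A, hAT, hA⟩ := Finset.exists_subset_card_eq (Nat.min_le_right (2 ^ k) T.card)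
  calc min (2 ^ k) (T.card : ℝ) * m = A.card • m := by rw [nsmul_eq_mul, hA]; push_cast; rfl
    _ ≤ ∑ y ∈ A, w y := Finset.card_nsmul_le_sum A w m fun y hy => hT y (hAT hy)
    _ ≤ optSuccess w k := (isLUB_optSuccess hw k).1 ⟨A, hA.trans_le (Nat.min_le_left _ _), rfl⟩

end OneShot

section Iid

variable {X : Type*}

/-- The i.i.d. product weights `pⁿ` on words of length `n`. -/
def iidPow (p : X → ℝ) (n : ℕ) : (Fin n → X) → ℝ := fun xs => ∏ i, p (xs i)

lemma iidPow_nonneg {p : X → ℝ} (hp : 0 ≤ p) (n : ℕ) : 0 ≤ iidPow p n :=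
  fun xs => Finset.prod_nonneg fun i _ => hp (xs i)

lemma iidPow_pos {p : X → ℝ} (hp : 0 < p) (n : ℕ) : 0 < iidPow p n := by
  obtain ⟨x, hx⟩ := (Pi.lt_def.1 hp).2
  exact Pi.lt_def.2 ⟨iidPow_nonneg hp.le n, fun _ => x, Finset.prod_pos fun _ _ => hx⟩

lemma sum_iidPow [Fintype X] (p : X → ℝ) (n : ℕ) : ∑ xs, iidPow p n xs = (∑ x, p x) ^ n :=
  (Fintype.sum_pow p n).symm

lemma iidPow_rpow {p : X → ℝ} (hp : 0 ≤ p) (n : ℕ) (β : ℝ) (xs : Fin n → X) :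
    iidPow p n xs ^ β = iidPow (fun x => p x ^ β) n xs :=
  (Real.finsetProd_rpow _ _ (fun i _ => hp (xs i)) β).symm

lemma logb_iidPow {p : X → ℝ} {n : ℕ} {xs : Fin n → X} (h : iidPow p n xs ≠ 0) :
    logb 2 (iidPow p n xs) = ∑ i, logb 2 (p (xs i)) :=
  logb_prod _ _ (Finset.prod_ne_zero_iff.1 h)

lemma iidPow_ne_zero_of_iidPow_ne_zero {p q : X → ℝ} (hqp : ∀ x, p x = 0 → q x = 0)
    {n : ℕ} {xs : Fin n → X} (h : iidPow q n xs ≠ 0) : iidPow p n xs ≠ 0 :=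
  Finset.prod_ne_zero_iff.2 fun i hi hpi => Finset.prod_ne_zero_iff.1 h i hi (hqp _ hpi)

end Iid

section WeakLaw

lemma measureReal_pi_ge_le_variance_div_sq {Ω : Type*} [MeasurableSpace Ω] {μ : Measure Ω}
    [IsProbabilityMeasure μ] {φ : Ω → ℝ} (hφ : MemLp φ 2 μ) (n : ℕ) {c : ℝ} (hc : 0 < c) :
    (Measure.pi fun _ : Fin n => μ).real {ω | c ≤ |∑ i, φ (ω i) - n * ∫ x, φ x ∂μ|} ≤
      n * Var[φ; μ] / c ^ 2 := by
  have coord_memLp (i : Fin n) :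
      MemLp (fun ω : Fin n → Ω => φ (ω i)) 2 (Measure.pi fun _ => μ) :=
    hφ.comp_measurePreserving (measurePreserving_eval (fun _ => μ) i)
  have mean : ∫ ω, ∑ i, φ (ω i) ∂(Measure.pi fun _ : Fin n => μ) = n * ∫ x, φ x ∂μ := by
    rw [integral_finsetSum _ fun i _ => (coord_memLp i).integrable one_le_two]
    simp [integral_comp_eval (μ := fun _ : Fin n => μ) hφ.aestronglyMeasurable]
  have var : Var[fun ω => ∑ i, φ (ω i); Measure.pi fun _ : Fin n => μ] = n * Var[φ; μ] := by
    have := variance_sum_pi (μ := fun _ : Fin n => μ) (X := fun _ => φ) fun _ => hφ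
    simpa [Finset.sum_fn] using this
  have chebyshev :=
    meas_ge_le_variance_div_sq (memLp_finsetSum Finset.univ fun i _ => coord_memLp i) hc
  rw [mean, var] at chebyshev
  exact ENNReal.toReal_le_of_le_ofReal
    (div_nonneg (mul_nonneg n.cast_nonneg (variance_nonneg _ _)) (sq_nonneg c)) chebyshev

lemma sum_iidPow_eq_measureReal_pi {X : Type*} [MeasurableSpace X]
    [MeasurableSingletonClass X] (μ : Measure X) [SigmaFinite μ] {n : ℕ}
    (T : Finset (Fin n → X)) :
    ∑ xs ∈ T, iidPow (fun x => μ.real {x}) n xs = (Measure.pi fun _ : Fin n => μ).real T := by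
  rw [← sum_measureReal_singleton]
  exact Finset.sum_congr rfl fun xs _ => by simp [iidPow, measureReal_def, ENNReal.toReal_prod]

variable {X : Type*} [Fintype X]

lemma IsProb.exists_measureReal_singleton [MeasurableSpace X] [MeasurableSingletonClass X]
    {q : X → ℝ} (hq : IsProb q) :
    ∃ μ : Measure X, IsProbabilityMeasure μ ∧ ∀ x, μ.real {x} = q x := by
  have sum_ofReal : ∑ x, ENNReal.ofReal (q x) = 1 := by
    rw [← ENNReal.ofReal_sum_of_nonneg fun x _ => hq.1 x, hq.2, ENNReal.ofReal_one]
  refine ⟨(PMF.ofFintype _ sum_ofReal).toMeasure, inferInstance, fun x => ?_⟩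
  rw [measureReal_def, PMF.toMeasure_apply_singleton _ x (measurableSet_singleton x),
    PMF.ofFintype_apply, ENNReal.toReal_ofReal (hq.1 x)]

lemma tendsto_sum_iidPow_le_abs_sum_sub {q : X → ℝ} (hq : IsProb q) (φ : X → ℝ) {δ : ℝ}
    (hδ : 0 < δ) :
    Tendsto (fun n : ℕ => ∑ xs : Fin n → X with n * δ ≤ |∑ i, φ (xs i) - n * ∑ x, q x * φ x|,
      iidPow q n xs) atTop (𝓝 0) := by
  let _ : MeasurableSpace X := ⊤
  obtain ⟨μ, _, hμ⟩ := hq.exists_measureReal_singleton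
  obtain rfl : (fun x => μ.real {x}) = q := funext hμ
  have bound_tendsto : Tendsto (fun n : ℕ => Var[φ; μ] / δ ^ 2 / n) atTop (𝓝 0) :=
    tendsto_const_div_atTop_nhds_zero_nat _
  refine squeeze_zero' (.of_forall fun n => Finset.sum_nonneg fun xs _ =>
    iidPow_nonneg hq.1 n xs) ?_ bound_tendsto
  filter_upwards [eventually_gt_atTop 0] with n hn
  have n_pos : (0 : ℝ) < n := by exact_mod_cast hn
  have mean : ∫ x, φ x ∂μ = ∑ x, μ.real {x} * φ x := integral_fintype .of_finite
  have chebyshev := measureReal_pi_ge_le_variance_div_sq (μ := μ) (φ := φ) .of_discrete n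
    (mul_pos n_pos hδ)
  rw [mean] at chebyshev
  rw [sum_iidPow_eq_measureReal_pi, Finset.coe_filter_univ]
  refine chebyshev.trans_eq ?_
  field_simp

end WeakLaw

section Entropy

variable {X : Type*} [Fintype X]

/-- The cross entropy `-∑ q log₂ p`, the mean surprisal of `p` under `q`; terms with `q x = 0`
vanish, while terms with `p x = 0 < q x` contribute the junk value `0` instead of `∞`. -/
noncomputable def crossEntropy (q p : X → ℝ) : ℝ := -∑ x, q x * logb 2 (p x)

lemma shannonEntropy_eq_sum_negMulLog (q : X → ℝ) :
    shannonEntropy q = (∑ x, negMulLog (q x)) / log 2 := by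
  simp only [shannonEntropy, negMulLog, logb, Finset.sum_div, ← Finset.sum_neg_distrib]
  exact Finset.sum_congr rfl fun x _ => by ring

lemma continuous_shannonEntropy : Continuous (shannonEntropy : (X → ℝ) → ℝ) := by
  simp only [funext shannonEntropy_eq_sum_negMulLog]
  fun_prop

lemma IsProb.nonempty {q : X → ℝ} (hq : IsProb q) : Nonempty X := by
  by_contra h
  rw [not_nonempty_iff] at h
  simpa using hq.2

lemma IsProb.pos {p : X → ℝ} (hp : IsProb p) : 0 < p := by
  refine lt_of_le_of_ne hp.1 ?_
  rintro rfl
  simpa using hp.2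

lemma shannonEntropy_le_logb_card {q : X → ℝ} (hq : IsProb q) :
    shannonEntropy q ≤ logb 2 (Fintype.card X) := by
  have := hq.nonempty
  have card_pos : (0 : ℝ) < Fintype.card X := by exact_mod_cast Fintype.card_pos
  have jensen := concaveOn_negMulLog.le_map_sum (t := Finset.univ)
    (w := fun _ : X => (Fintype.card X : ℝ)⁻¹) (p := q) (fun _ _ => by positivity)
    (by simp) fun x _ => hq.1 x
  simp only [smul_eq_mul, ← Finset.mul_sum, hq.2, mul_one, negMulLog, log_inv] at jensen
  rw [shannonEntropy_eq_sum_negMulLog, logb]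
  gcongr
  refine le_of_mul_le_mul_left (jensen.trans_eq ?_) (inv_pos.2 card_pos)
  ring

end Entropy

section Tilting

variable {X : Type*} [Fintype X] {p : X → ℝ}

/-- The Rényi entropy `H_β` in bits; the order `β = 1` is not covered. -/
noncomputable def renyiEntropy (β : ℝ) (p : X → ℝ) : ℝ :=
  (1 / (1 - β)) * logb 2 (∑ x, p x ^ β)

/-- The exponent whose supremum over `β > 1` is the strong converse exponent at rate `r`. -/
noncomputable def renyiExponent (p : X → ℝ) (r β : ℝ) : ℝ :=
  ((β - 1) / β) * (renyiEntropy β p - r)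

/-- The tilted (escort) distribution of order `β`, proportional to `p ^ β`. -/
noncomputable def tilt (p : X → ℝ) (β : ℝ) : X → ℝ := fun x => p x ^ β / ∑ y, p y ^ β

lemma renyiExponent_eq (p : X → ℝ) (r : ℝ) {β : ℝ} (hβ : 1 < β) :
    renyiExponent p r β = -((β - 1) / β * r + 1 / β * logb 2 (∑ x, p x ^ β)) := by
  have : 1 - β ≠ 0 := by linarith
  have : β ≠ 0 := by linarith
  rw [renyiExponent, renyiEntropy]
  field_simp
  ring

lemma sum_rpow_pos (hp : 0 < p) (β : ℝ) : 0 < ∑ x, p x ^ β := by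
  obtain ⟨x, hx⟩ := (Pi.lt_def.1 hp).2
  exact Finset.sum_pos' (fun y _ => Real.rpow_nonneg (hp.le y) β)
    ⟨x, Finset.mem_univ x, Real.rpow_pos_of_pos hx β⟩

lemma isProb_tilt (hp : 0 < p) (β : ℝ) : IsProb (tilt p β) :=
  ⟨fun x => div_nonneg (Real.rpow_nonneg (hp.le x) β) (sum_rpow_pos hp β).le, by
    simp only [tilt, ← Finset.sum_div, div_self (sum_rpow_pos hp β).ne']⟩

lemma tilt_eq_zero {β : ℝ} (hβ : β ≠ 0) {x : X} (hx : p x = 0) : tilt p β x = 0 := by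
  rw [tilt, hx, Real.zero_rpow hβ, zero_div]

lemma continuousOn_tilt (hp : 0 < p) : ContinuousOn (tilt p) {0}ᶜ := by
  have rpow_continuousOn (x : X) : ContinuousOn (fun β : ℝ => p x ^ β) {0}ᶜ :=
    fun β hβ => (continuousAt_const_rpow' hβ).continuousWithinAt
  exact continuousOn_pi.2 fun x => (rpow_continuousOn x).div
    (continuousOn_finsetSum _ fun y _ => rpow_continuousOn y) fun β _ => (sum_rpow_pos hp β).ne'

lemma shannonEntropy_tilt (hp : 0 < p) {β : ℝ} (hβ : β ≠ 0) :
    shannonEntropy (tilt p β) = β * crossEntropy (tilt p β) p + logb 2 (∑ x, p x ^ β) := by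
  set Z := ∑ x, p x ^ β
  have surprisal (x : X) :
      tilt p β x * logb 2 (tilt p β x) =
        β * (tilt p β x * logb 2 (p x)) - tilt p β x * logb 2 Z := by
    rcases (hp.le x).eq_or_lt with hx | hx
    · simp [tilt_eq_zero hβ hx.symm]
    · rw [show logb 2 (tilt p β x) = β * logb 2 (p x) - logb 2 Z by
        rw [tilt, logb_div (Real.rpow_pos_of_pos hx β).ne' (sum_rpow_pos hp β).ne',
          logb_rpow_eq_mul_logb_of_pos hx]]
      ring
  simp only [shannonEntropy, crossEntropy, surprisal, Finset.sum_sub_distrib, ← Finset.mul_sum,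
    ← Finset.sum_mul, (isProb_tilt hp β).2]
  ring

lemma crossEntropy_tilt_sub_min (hp : 0 < p) (r : ℝ) {β : ℝ} (hβ : 1 < β) :
    crossEntropy (tilt p β) p - min r (shannonEntropy (tilt p β)) = renyiExponent p r β +
      max ((shannonEntropy (tilt p β) - r) / β)
        ((β - 1) / β * (r - shannonEntropy (tilt p β))) := by
  have hβ0 : 0 < β := by linarith
  have crossEntropy_eq : crossEntropy (tilt p β) p =
      (shannonEntropy (tilt p β) - logb 2 (∑ x, p x ^ β)) / β := by
    rw [shannonEntropy_tilt hp hβ0.ne']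
    field_simp
    ring
  rw [renyiExponent_eq p r hβ, crossEntropy_eq]
  have ratio_nonneg : 0 ≤ (β - 1) / β := div_nonneg (by linarith) hβ0.le
  rcases le_total r (shannonEntropy (tilt p β)) with h | h
  · rw [min_eq_left h, max_eq_left ((mul_nonpos_of_nonneg_of_nonpos ratio_nonneg
      (sub_nonpos.2 h)).trans (div_nonneg (sub_nonneg.2 h) hβ0.le))]
    field_simp
    ring
  · rw [min_eq_right h, max_eq_right ((div_nonpos_of_nonpos_of_nonneg
      (sub_nonpos.2 h) hβ0.le).trans (mul_nonneg ratio_nonneg (sub_nonneg.2 h)))]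
    field_simp
    ring

-- If `h` stays above `r`, take `β → ∞`; if `h 1 ≤ r`, take `β → 1`; otherwise `h` crosses `r`.
lemma exists_one_lt_max_le {h : ℝ → ℝ} (h_cont : ContinuousOn h (Ici 1)) {C : ℝ}
    (h_le : ∀ β, 1 < β → h β ≤ C) (r : ℝ) {ε : ℝ} (hε : 0 < ε) :
    ∃ β, 1 < β ∧ max ((h β - r) / β) ((β - 1) / β * (r - h β)) ≤ ε := by
  by_cases h_above : ∀ β, 1 < β → r ≤ h β
  · have tendsto_zero : Tendsto (fun β : ℝ => (C - r) / β) atTop (𝓝 0) :=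
      tendsto_const_nhds.div_atTop tendsto_id
    obtain ⟨β, hβε, hβ⟩ :=
      ((tendsto_zero.eventually_le_const hε).and (eventually_gt_atTop 1)).exists
    have hβ0 : 0 < β := by linarith
    refine ⟨β, hβ, max_le (le_trans ?_ hβε) (le_trans ?_ hε.le)⟩
    · gcongr
      exact h_le β hβ
    · exact mul_nonpos_of_nonneg_of_nonpos (div_nonneg (by linarith) hβ0.le)
        (sub_nonpos.2 (h_above β hβ))
  push Not at h_above
  obtain ⟨β, hβ, hβr⟩ := h_above
  rcases le_or_gt (h 1) r with h_one | h_one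
  · have gap_cont :
        ContinuousOn (fun β => max ((h β - r) / β) ((β - 1) / β * (r - h β))) (Ici 1) := by
      have ne_zero : ∀ β ∈ Ici (1 : ℝ), β ≠ 0 := fun β hβ => (zero_lt_one.trans_le hβ).ne'
      fun_prop (disch := assumption)
    have gap_one : max ((h 1 - r) / 1) ((1 - 1) / 1 * (r - h 1)) < ε := by
      simpa [h_one] using hε
    have eventually_gap : ∀ᶠ β in 𝓝[>] 1, max ((h β - r) / β) ((β - 1) / β * (r - h β)) < ε :=
      ((gap_cont 1 self_mem_Ici).mono Ioi_subset_Ici_self).eventually_lt_const gap_one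
    obtain ⟨γ, hγε, hγ⟩ := (eventually_gap.and self_mem_nhdsWithin).exists
    exact ⟨γ, hγ, hγε.le⟩
  · obtain ⟨γ, hγ, hγr⟩ := intermediate_value_Ioo' hβ.le (h_cont.mono Icc_subset_Ici_self)
      ⟨hβr, h_one⟩
    exact ⟨γ, hγ.1, by simpa [hγr] using hε.le⟩

lemma exists_crossEntropy_tilt_sub_min_le (hp : 0 < p) (r : ℝ) {ε : ℝ} (hε : 0 < ε) :
    ∃ β, 1 < β ∧ crossEntropy (tilt p β) p - min r (shannonEntropy (tilt p β)) ≤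
      renyiExponent p r β + ε := by
  have entropy_cont : ContinuousOn (fun β => shannonEntropy (tilt p β)) (Ici 1) :=
    continuous_shannonEntropy.comp_continuousOn
      ((continuousOn_tilt hp).mono fun β hβ => (zero_lt_one.trans_le hβ).ne')
  obtain ⟨β, hβ, hβε⟩ := exists_one_lt_max_le entropy_cont
    (fun β _ => shannonEntropy_le_logb_card (isProb_tilt hp β)) r hε
  exact ⟨β, hβ, (crossEntropy_tilt_sub_min hp r hβ).trans_le (by gcongr)⟩

end Tilting

section Typicality

variable {X : Type*} [Fintype X] {p q : X → ℝ}

/-- The words of positive `qⁿ`-weight whose surprisals under `qⁿ` and `pⁿ` are both within `n δ`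
of their means under `qⁿ`. -/
noncomputable def typicalSet (q p : X → ℝ) (n : ℕ) (δ : ℝ) : Finset (Fin n → X) :=
  {xs | iidPow q n xs ≠ 0 ∧ |logb 2 (iidPow q n xs) + n * shannonEntropy q| < n * δ ∧
    |logb 2 (iidPow p n xs) + n * crossEntropy q p| < n * δ}

lemma two_rpow_le_iidPow_of_mem_typicalSet (hp : 0 ≤ p) (hqp : ∀ x, p x = 0 → q x = 0) {n : ℕ}
    {δ : ℝ} {xs : Fin n → X} (hxs : xs ∈ typicalSet q p n δ) :
    (2 : ℝ) ^ (-(n * (crossEntropy q p + δ))) ≤ iidPow p n xs := by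
  obtain ⟨ne_zero, -, dev⟩ := (Finset.mem_filter.1 hxs).2
  have pos : 0 < iidPow p n xs :=
    (iidPow_nonneg hp n xs).lt_of_ne (iidPow_ne_zero_of_iidPow_ne_zero hqp ne_zero).symm
  rw [← le_logb_iff_rpow_le one_lt_two pos]
  linarith [(abs_lt.1 dev).1]

lemma iidPow_le_two_rpow_of_mem_typicalSet (hq : 0 ≤ q) {n : ℕ} {δ : ℝ} {xs : Fin n → X}
    (hxs : xs ∈ typicalSet q p n δ) :
    iidPow q n xs ≤ (2 : ℝ) ^ (-(n * (shannonEntropy q - δ))) := by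
  obtain ⟨ne_zero, dev, -⟩ := (Finset.mem_filter.1 hxs).2
  rw [← logb_le_iff_le_rpow one_lt_two ((iidPow_nonneg hq n xs).lt_of_ne ne_zero.symm)]
  linarith [(abs_lt.1 dev).2]

lemma sum_iidPow_le_sum_typicalSet_add (hq : 0 ≤ q) (hqp : ∀ x, p x = 0 → q x = 0) (n : ℕ)
    (δ : ℝ) :
    ∑ xs, iidPow q n xs ≤ ∑ xs ∈ typicalSet q p n δ, iidPow q n xs +
      ∑ xs : Fin n → X with
        n * δ ≤ |∑ i, logb 2 (q (xs i)) - n * ∑ x, q x * logb 2 (q x)|, iidPow q n xs +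
      ∑ xs : Fin n → X with
        n * δ ≤ |∑ i, logb 2 (p (xs i)) - n * ∑ x, q x * logb 2 (p x)|, iidPow q n xs := by
  simp only [typicalSet, Finset.sum_filter, ← Finset.sum_add_distrib]
  refine Finset.sum_le_sum fun xs _ => ?_
  have nonneg := iidPow_nonneg hq n xs
  by_cases h : iidPow q n xs = 0
  · simp [h]
  · rw [logb_iidPow h, logb_iidPow (iidPow_ne_zero_of_iidPow_ne_zero hqp h), shannonEntropy,
      crossEntropy, mul_neg, mul_neg, ← sub_eq_add_neg, ← sub_eq_add_neg]
    split_ifs <;> first | linarith | simp_all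

lemma eventually_half_le_sum_typicalSet (hq : IsProb q) (hqp : ∀ x, p x = 0 → q x = 0) {δ : ℝ}
    (hδ : 0 < δ) :
    ∀ᶠ n : ℕ in atTop, 1 / 2 ≤ ∑ xs ∈ typicalSet q p n δ, iidPow q n xs := by
  have atypical_le (φ : X → ℝ) := (tendsto_sum_iidPow_le_abs_sum_sub hq φ hδ).eventually_le_const
    (show (0 : ℝ) < 1 / 4 by norm_num)
  filter_upwards [atypical_le fun x => logb 2 (q x), atypical_le fun x => logb 2 (p x)]
    with n hn_q hn_p
  have total := sum_iidPow_le_sum_typicalSet_add hq.1 hqp n δ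
  rw [sum_iidPow, hq.2, one_pow] at total
  linarith

lemma eventually_two_rpow_le_card_typicalSet (hq : IsProb q) (hqp : ∀ x, p x = 0 → q x = 0)
    {δ : ℝ} (hδ : 0 < δ) :
    ∀ᶠ n : ℕ in atTop,
      (2 : ℝ) ^ (n * (shannonEntropy q - δ) - 1) ≤ (typicalSet q p n δ).card := by
  filter_upwards [eventually_half_le_sum_typicalSet hq hqp hδ] with n hn
  have mass_le := hn.trans (Finset.sum_le_card_nsmul _ _ _ fun xs hxs =>
    iidPow_le_two_rpow_of_mem_typicalSet hq.1 hxs)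
  rw [nsmul_eq_mul, rpow_neg zero_le_two, ← div_eq_mul_inv, le_div_iff₀ (by positivity)] at mass_le
  rw [rpow_sub zero_lt_two, rpow_one]
  linarith

end Typicality

section Exponents

variable {X : Type*} [Fintype X] {p : X → ℝ}

/-- The exponent `(-1 / n) log₂ P_s(n, r)` at block length `n` and rate `r`. -/
noncomputable def blockExponent [DecidableEq X] (p : X → ℝ) (r : ℝ) (n : ℕ) : ℝ :=
  (-1 / (n : ℝ)) * logb 2 (optSuccess (iidPow p n) ⌈(n : ℝ) * r⌉₊)

lemma renyiExponent_sub_le_blockExponent [DecidableEq X] (hp : 0 < p) {r : ℝ} (hr : 0 ≤ r)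
    {β : ℝ} (hβ : 1 < β) {n : ℕ} (hn : 0 < n) :
    renyiExponent p r β - 1 / n ≤ blockExponent p r n := by
  obtain ⟨x, -⟩ := (Pi.lt_def.1 hp).2
  have : Nonempty X := ⟨x⟩
  have n_pos : (0 : ℝ) < n := by exact_mod_cast hn
  have hβ0 : 0 < β := by linarith
  have Z_pos := sum_rpow_pos hp β
  have ratio_nonneg : 0 ≤ (β - 1) / β := div_nonneg (by linarith) hβ0.le
  have ratio_le_one : (β - 1) / β ≤ 1 := (div_le_one hβ0).2 (by linarith)
  have bits_le : (⌈(n : ℝ) * r⌉₊ : ℝ) ≤ n * r + 1 := (Nat.ceil_lt_add_one (by positivity)).le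
  have converse := optSuccess_le_rpow_mul_rpow (iidPow_nonneg hp.le n) ⌈(n : ℝ) * r⌉₊ hβ
  simp only [iidPow_rpow hp.le, sum_iidPow] at converse
  have log_converse := logb_le_logb_of_le one_lt_two (optSuccess_pos (iidPow_pos hp n) _) converse
  rw [logb_mul (by positivity) (by positivity), logb_rpow_eq_mul_logb_of_pos (by positivity),
    logb_rpow_eq_mul_logb_of_pos (by positivity), logb_pow, logb_pow, logb_self_eq_one one_lt_two,
    mul_one] at log_converse
  rw [renyiExponent_eq p r hβ, blockExponent, div_mul_eq_mul_div (-1 : ℝ), le_div_iff₀ n_pos,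
    sub_mul, one_div_mul_cancel n_pos.ne']
  have bits_term : (β - 1) / β * (⌈(n : ℝ) * r⌉₊ : ℝ) ≤ (β - 1) / β * (n * r) + 1 := by
    nlinarith
  linarith

-- The typical set has about `2 ^ (n H(q))` words, each of `pⁿ`-weight about `2 ^ (-n H(q, p))`, and
-- a code can cover about `2 ^ (n min r H(q))` of them.
lemma eventually_blockExponent_le [DecidableEq X] {q : X → ℝ} (hp : 0 ≤ p) (hq : IsProb q)
    (hqp : ∀ x, p x = 0 → q x = 0) (r : ℝ) {ε : ℝ} (hε : 0 < ε) :
    ∀ᶠ n : ℕ in atTop,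
      blockExponent p r n ≤ crossEntropy q p - min r (shannonEntropy q) + ε := by
  have := hq.nonempty
  have δ_pos : 0 < ε / 3 := by positivity
  have inv_tendsto : Tendsto (fun n : ℕ => 1 / (n : ℝ)) atTop (𝓝 0) :=
    tendsto_one_div_atTop_nhds_zero_nat
  filter_upwards [eventually_two_rpow_le_card_typicalSet hq hqp δ_pos, eventually_gt_atTop 0,
    inv_tendsto.eventually_le_const δ_pos] with n card_ge hn inv_le
  have n_pos : (0 : ℝ) < n := by exact_mod_cast hn
  set m := min r (shannonEntropy q)
  have card_min_ge : (2 : ℝ) ^ (n * (m - ε / 3) - 1) ≤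
      min (2 ^ ⌈(n : ℝ) * r⌉₊) ((typicalSet q p n (ε / 3)).card : ℝ) := by
    refine le_min ?_ (le_trans (rpow_le_rpow_of_exponent_le one_le_two ?_) card_ge)
    · rw [← rpow_natCast]
      refine rpow_le_rpow_of_exponent_le one_le_two (le_trans ?_ (Nat.le_ceil _))
      nlinarith [min_le_left r (shannonEntropy q)]
    · gcongr
      exact min_le_right _ _
  have success_ge : (2 : ℝ) ^ (n * (m - ε / 3) - 1 + -(n * (crossEntropy q p + ε / 3))) ≤
      optSuccess (iidPow p n) ⌈(n : ℝ) * r⌉₊ := by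
    rw [rpow_add zero_lt_two]
    refine le_trans ?_ (min_mul_le_optSuccess (iidPow_nonneg hp n) _
      fun xs (hxs : xs ∈ typicalSet q p n (ε / 3)) =>
        two_rpow_le_iidPow_of_mem_typicalSet hp hqp hxs)
    gcongr
  have log_success_ge :=
    (le_logb_iff_rpow_le one_lt_two ((rpow_pos_of_pos two_pos _).trans_le success_ge)).2 success_ge
  rw [blockExponent, div_mul_eq_mul_div, div_le_iff₀ n_pos]
  rw [div_le_iff₀ n_pos] at inv_le
  linarith

lemma bddAbove_renyiExponent (hp : 0 < p) {r : ℝ} (hr : 0 ≤ r) :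
    BddAbove {v | ∃ β : ℝ, 1 < β ∧ v = renyiExponent p r β} := by
  classical
  refine ⟨blockExponent p r 1 + 1 / (1 : ℕ), ?_⟩
  rintro _ ⟨β, hβ, rfl⟩
  exact sub_le_iff_le_add.1 (renyiExponent_sub_le_blockExponent hp hr hβ one_pos)

end Exponents

theorem sc_exponent_classical_compression_general {X : Type*} [Fintype X] [DecidableEq X]
    (p : X → ℝ) (hp : 0 < p) (r : ℝ) (hr0 : 0 ≤ r) :
    Tendsto (blockExponent p r) atTop
      (𝓝 (sSup {v | ∃ β : ℝ, 1 < β ∧ v = renyiExponent p r β})) := by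
  have sSup_isLUB := isLUB_csSup (s := {v | ∃ β : ℝ, 1 < β ∧ v = renyiExponent p r β})
    ⟨_, 2, one_lt_two, rfl⟩ (bddAbove_renyiExponent hp hr0)
  refine tendsto_order.2 ⟨fun a ha => ?_, fun b hb => ?_⟩
  · obtain ⟨_, ⟨β, hβ, rfl⟩, a_lt⟩ := (lt_isLUB_iff sSup_isLUB).1 ha
    filter_upwards [eventually_gt_atTop 0,
      tendsto_one_div_atTop_nhds_zero_nat.eventually_lt_const (sub_pos.2 a_lt)] with n hn inv_lt
    linarith [renyiExponent_sub_le_blockExponent hp hr0 hβ hn]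
  · have ε_pos := div_pos (sub_pos.2 hb) three_pos
    obtain ⟨β, hβ, tilt_le⟩ := exists_crossEntropy_tilt_sub_min_le hp r ε_pos
    filter_upwards [eventually_blockExponent_le hp.le (isProb_tilt hp β)
      (fun _ => tilt_eq_zero (zero_lt_one.trans hβ).ne') r ε_pos] with n exponent_le
    linarith [sSup_isLUB.1 ⟨β, hβ, rfl⟩]

/-- Strong converse exponent of classical data compression:
for `0 ≤ r < H(p)`,
`lim_n (-1/n) log₂ P_s(n,r) = sup_{β>1} ((β-1)/β)(H_β(p) - r)`,
where `P_s(n,r)` is the optimal success probability over encoder/decoder pairs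
`f : Xⁿ → {0,1}^{⌈nr⌉}`, `g : {0,1}^{⌈nr⌉} → Xⁿ`. -/
theorem sc_exponent_classical_compression {X : Type*} [Fintype X] [DecidableEq X] (p : X → ℝ)
    (hp : IsProb p) (r : ℝ) (hr0 : 0 ≤ r) (hr : r < shannonEntropy p) :
    Filter.Tendsto (fun n : ℕ =>
        (-1 / (n : ℝ)) * Real.logb 2 (sSup {v |
          ∃ (f : (Fin n → X) → (Fin (Nat.ceil ((n : ℝ) * r)) → Bool))
            (g : (Fin (Nat.ceil ((n : ℝ) * r)) → Bool) → (Fin n → X)),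
            v = ∑ xs : {xs : Fin n → X // g (f xs) = xs}, ∏ i, p (xs.1 i)}))
      Filter.atTop
      (nhds (sSup {v | ∃ β : ℝ, 1 < β ∧
        v = ((β - 1) / β) * ((1 / (1 - β)) * Real.logb 2 (∑ x, p x ^ β) - r)})) := by
  exact sc_exponent_classical_compression_general p hp.pos r hr0
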